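/- Let X be a centered Gaussian process on [a,b] with almost surely twice continuously differentiable sample paths and twice continuously differentiable covariance r(s,t). Write r₁₀(t,t) = ∂_s r(s,t)|_{s=t} and r₁₁(t,t) = ∂_s∂_t r(s,t)|_{s=t}, and assume that for all t ∈ [a,b]: r(t,t) ≤ 1, r₁₀(t,t) < 0, r₁₁(t,t) > 0, and r₁₁(t,t) − r₁₀(t,t)²/r(t,t) > 0. Set χ₂ = min_{t∈[a,b]} r₁₀(t,t)²/r₁₁(t,t) > 0. Then there exists C > 0 such that for all u ≥ 1, E[N_u^+([a,b])] ≤ C e^{−u²(1+χ₂)/2}. -/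

import Mathlib

/-!
For a small step `h > 0` write `X (t + h) = X t + h * Y` with `Y` the difference quotient of `X`
over `[t, t + h]`, and `X t = W + κ * Y` with `W` the residual of the linear regression of `X t` on
`Y`, which is independent of `Y`. As `r₁₀ < 0`, the slope `κ` is negative and bounded away from `0`,
so `κ + h ≤ 0`. The event `X t < u ≤ X (t + h)` then forces `Y > 0` and confines `W` to an interval
of length `h * Y` to the right of `u`; its probability is at most `h * 𝔼|Y|` times the density of
`W` at `u`. In the limit `h → 0` the variance of `W` is
`r(t,t) - r₁₀(t,t)² / r₁₁(t,t) ≤ 1 - χ₂ < 1 / (1 + χ₂)`, whence the bound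
`C * h * exp (-u² (1 + χ₂) / 2)` for small `h`, uniformly in `t`. Summing over the cells of a grid
of mesh `h` and letting `h → 0` with Fatou's lemma bounds the expected number of up-crossings.
-/

open MeasureTheory ProbabilityTheory Set
open scoped NNReal

section Gaussian

lemma antitoneOn_gaussianPDF_zero (v : ℝ≥0) : AntitoneOn (gaussianPDF 0 v) (Ici 0) := by
  intro x hx y _ hxy
  have hx : 0 ≤ x := hx
  rw [gaussianPDF, gaussianPDF, gaussianPDFReal, gaussianPDFReal, sub_zero, sub_zero]
  gcongr

lemma gaussianReal_zero_Ico_le {v : ℝ≥0} (hv : v ≠ 0) {l : ℝ} (hl : 0 ≤ l) (m : ℝ) :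
    gaussianReal 0 v (Ico l m) ≤ gaussianPDF 0 v l * ENNReal.ofReal (m - l) :=
  calc gaussianReal 0 v (Ico l m)
    _ = ∫⁻ x in Ico l m, gaussianPDF 0 v x := gaussianReal_apply 0 hv _
    _ ≤ ∫⁻ _ in Ico l m, gaussianPDF 0 v l :=
        setLIntegral_mono measurable_const fun _ hx ↦
          antitoneOn_gaussianPDF_zero v hl (hl.trans hx.1) hx.1
    _ = gaussianPDF 0 v l * ENNReal.ofReal (m - l) := by
        rw [setLIntegral_const, Real.volume_Ico]

lemma gaussianPDFReal_zero_le {v : ℝ≥0} {τ c : ℝ} (hτ : 0 < τ) (hτv : τ ≤ v) (hcv : v * c ≤ 1)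
    (u : ℝ) :
    gaussianPDFReal 0 v u ≤ (√(2 * Real.pi * τ))⁻¹ * Real.exp (-(u ^ 2) * c / 2) := by
  have hv : 0 < (v : ℝ) := hτ.trans_le hτv
  rw [gaussianPDFReal, sub_zero]
  gcongr ?_ * Real.exp ?_
  · gcongr
  · rw [div_le_div_iff₀ (by positivity) two_pos]
    nlinarith [mul_le_mul_of_nonneg_left hcv (sq_nonneg u)]

variable {Ω : Type*} [MeasurableSpace Ω] {P : Measure Ω} {A Y W : Ω → ℝ}

lemma hasGaussianLaw_prodMk_of_forall_map_eq (hA : AEMeasurable A P)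
    (hY : AEMeasurable Y P)
    (h : ∀ α β : ℝ, ∃ (m : ℝ) (v : ℝ≥0),
      P.map (fun ω ↦ α * A ω + β * Y ω) = gaussianReal m v) :
    HasGaussianLaw (fun ω ↦ (A ω, Y ω)) P where
  isGaussian_map := by
    refine isGaussian_of_map_eq_gaussianReal fun Λ ↦ ?_
    obtain ⟨m, v, hv⟩ := h (Λ (1, 0)) (Λ (0, 1))
    refine ⟨m, v, ?_⟩
    rw [AEMeasurable.map_map_of_aemeasurable (by fun_prop) (by fun_prop), ← hv]
    congr 1 with ω
    calc Λ (A ω, Y ω) = Λ (A ω • ((1, 0) : ℝ × ℝ) + Y ω • ((0, 1) : ℝ × ℝ)) := by simp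
      _ = Λ (1, 0) * A ω + Λ (0, 1) * Y ω := by
        rw [map_add, map_smul, map_smul, smul_eq_mul, smul_eq_mul, mul_comm, mul_comm (Y ω)]

lemma ae_ne_of_variance_ne_zero (hA : HasGaussianLaw A P) (hvar : Var[A; P] ≠ 0)
    (u : ℝ) : ∀ᵐ ω ∂P, A ω ≠ u := by
  have hv : Var[A; P].toNNReal ≠ 0 :=
    (Real.toNNReal_pos.2 ((variance_nonneg A P).lt_of_ne' hvar)).ne'
  have := nullSingletonClass_gaussianReal (μ := P[A]) hv
  refine ae_of_ae_map hA.aemeasurable (p := (· ≠ u)) ?_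
  rw [hA.map_eq_gaussianReal]
  exact Measure.ae_ne _ u

lemma covariance_eq_of_integral_eq_zero [IsProbabilityMeasure P] (hA : MemLp A 2 P)
    (hY : MemLp Y 2 P) (hA0 : P[A] = 0) : cov[A, Y; P] = ∫ ω, A ω * Y ω ∂P := by
  rw [covariance_eq_sub hA hY, hA0, zero_mul, sub_zero]
  rfl

lemma integral_eq_zero_of_map_eq_gaussianReal_zero {v : ℝ≥0} (hA : AEMeasurable A P)
    (h : P.map A = gaussianReal 0 v) : P[A] = 0 := by
  rw [← integral_map hA (f := fun x ↦ x) (by fun_prop), h, integral_id_gaussianReal]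

/-- The residual of the linear regression of `A` on `Y` under `P`. -/
noncomputable def linearResidual (A Y : Ω → ℝ) (P : Measure Ω) (ω : Ω) : ℝ :=
  A ω - cov[A, Y; P] / Var[Y; P] * Y ω

lemma covariance_linearResidual [IsFiniteMeasure P] (hA : MemLp A 2 P) (hY : MemLp Y 2 P)
    (hvar : Var[Y; P] ≠ 0) : cov[linearResidual A Y P, Y; P] = 0 := by
  unfold linearResidual
  rw [covariance_fun_sub_left hA (hY.const_mul _) hY, covariance_const_mul_left,
    covariance_self hY.aemeasurable, div_mul_cancel₀ _ hvar, sub_self]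

lemma variance_linearResidual [IsFiniteMeasure P] (hA : MemLp A 2 P) (hY : MemLp Y 2 P) :
    Var[linearResidual A Y P; P] = Var[A; P] - cov[A, Y; P] ^ 2 / Var[Y; P] := by
  unfold linearResidual
  rw [variance_fun_sub hA (hY.const_mul _), variance_const_mul, covariance_const_mul_right]
  by_cases hvar : Var[Y; P] = 0
  · simp [hvar]
  · field_simp
    ring

lemma integral_linearResidual (hA : Integrable A P) (hY : Integrable Y P) (hA0 : P[A] = 0)
    (hY0 : P[Y] = 0) : P[linearResidual A Y P] = 0 := by
  unfold linearResidual
  rw [integral_sub hA (hY.const_mul _), integral_const_mul, hA0, hY0, mul_zero, sub_zero]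

lemma hasGaussianLaw_linearResidual_prodMk (h : HasGaussianLaw (fun ω ↦ (A ω, Y ω)) P) :
    HasGaussianLaw (fun ω ↦ (linearResidual A Y P ω, Y ω)) P :=
  h.map_fun ((ContinuousLinearMap.fst ℝ ℝ ℝ -
    (cov[A, Y; P] / Var[Y; P]) • ContinuousLinearMap.snd ℝ ℝ ℝ).prod
      (ContinuousLinearMap.snd ℝ ℝ ℝ))

/-- Conditionally on `Y = y > 0` the event confines `W` to an interval of length `h * y` that
lies to the right of `u`, where the density of `W` is at most its value at `u`. -/
lemma measure_upcrossing_le_of_indepFun {v : ℝ≥0} {κ h u : ℝ} [IsFiniteMeasure P]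
    (hind : IndepFun W Y P) (hW : HasLaw W (gaussianReal 0 v) P) (hv : v ≠ 0)
    (hY : AEMeasurable Y P) (hh : 0 < h) (hκ : κ + h ≤ 0) (hu : 0 ≤ u) :
    P {ω | W ω + κ * Y ω < u ∧ u ≤ W ω + (κ + h) * Y ω} ≤
      gaussianPDF 0 v u * (ENNReal.ofReal h * ∫⁻ ω, ‖Y ω‖ₑ ∂P) := by
  let S : Set (ℝ × ℝ) := {p | p.2 + κ * p.1 < u ∧ u ≤ p.2 + (κ + h) * p.1}
  have hS : MeasurableSet S :=
    (measurableSet_lt (f := fun p : ℝ × ℝ ↦ p.2 + κ * p.1) (by fun_prop) (by fun_prop)).inter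
      (measurableSet_le (g := fun p : ℝ × ℝ ↦ p.2 + (κ + h) * p.1) (by fun_prop) (by fun_prop))
  have hslice (y : ℝ) :
      gaussianReal 0 v (Prod.mk y ⁻¹' S) ≤ gaussianPDF 0 v u * (ENNReal.ofReal h * ‖y‖ₑ) := by
    rcases le_or_gt y 0 with hy | hy
    · have hempty : Prod.mk y ⁻¹' S = ∅ :=
        eq_empty_of_forall_notMem fun w ⟨hlt, hle⟩ ↦ by dsimp only at hlt hle; nlinarith
      simp [hempty]
    · have hul : u ≤ u - (κ + h) * y := by nlinarith
      calc gaussianReal 0 v (Prod.mk y ⁻¹' S)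
        _ ≤ gaussianReal 0 v (Ico (u - (κ + h) * y) (u - κ * y)) :=
            measure_mono fun w ⟨hlt, hle⟩ ↦ by
              dsimp only at hlt hle; constructor <;> linarith
        _ ≤ gaussianPDF 0 v (u - (κ + h) * y) *
              ENNReal.ofReal (u - κ * y - (u - (κ + h) * y)) :=
            gaussianReal_zero_Ico_le hv (hu.trans hul) _
        _ ≤ gaussianPDF 0 v u * (ENNReal.ofReal h * ‖y‖ₑ) := by
            rw [Real.enorm_of_nonneg hy.le, ← ENNReal.ofReal_mul hh.le]
            gcongr
            · exact antitoneOn_gaussianPDF_zero v hu (hu.trans hul) hul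
            · linarith
  calc P {ω | W ω + κ * Y ω < u ∧ u ≤ W ω + (κ + h) * Y ω}
    _ = (P.map fun ω ↦ (Y ω, W ω)) S :=
        (Measure.map_apply_of_aemeasurable (hY.prodMk hW.aemeasurable) hS).symm
    _ = ∫⁻ y, gaussianReal 0 v (Prod.mk y ⁻¹' S) ∂(P.map Y) := by
        rw [hind.symm.map_prod_eq_prod_map_map hY hW.aemeasurable, hW.map_eq,
          Measure.prod_apply hS]
    _ ≤ ∫⁻ y, gaussianPDF 0 v u * (ENNReal.ofReal h * ‖y‖ₑ) ∂(P.map Y) := lintegral_mono hslice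
    _ = gaussianPDF 0 v u * (ENNReal.ofReal h * ∫⁻ ω, ‖Y ω‖ₑ ∂P) := by
        rw [lintegral_map' (by fun_prop) hY, lintegral_const_mul'' _ (by fun_prop),
          lintegral_const_mul'' _ (by fun_prop)]

lemma lintegral_enorm_le_sqrt_variance [IsProbabilityMeasure P] (hY : MemLp Y 2 P)
    (hY0 : P[Y] = 0) : ∫⁻ ω, ‖Y ω‖ₑ ∂P ≤ ENNReal.ofReal √(Var[Y; P]) := by
  rw [← ofReal_integral_norm_eq_lintegral_enorm (hY.integrable one_le_two)]
  refine ENNReal.ofReal_le_ofReal (Real.le_sqrt_of_sq_le ?_)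
  have hnonneg := variance_nonneg (fun ω ↦ ‖Y ω‖) P
  rw [variance_eq_sub hY.norm] at hnonneg
  rw [variance_of_integral_eq_zero hY.aemeasurable hY0]
  simpa only [Pi.pow_apply, Real.norm_eq_abs, sq_abs, sub_nonneg] using hnonneg

/-- Writing `A = W + κ * Y` with `W` the residual of `A` on `Y`, the two sides of the event become
affine in `Y` with coefficients independent of `W`. -/
lemma measure_upcrossing_le {h u : ℝ} (hAY : HasGaussianLaw (fun ω ↦ (A ω, Y ω)) P)
    (hA0 : P[A] = 0) (hY0 : P[Y] = 0) (hvar : Var[Y; P] ≠ 0)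
    (hres : 0 < Var[A; P] - cov[A, Y; P] ^ 2 / Var[Y; P]) (hh : 0 < h)
    (hslope : cov[A, Y; P] / Var[Y; P] + h ≤ 0) (hu : 0 ≤ u) :
    P {ω | A ω < u ∧ u ≤ A ω + h * Y ω} ≤
      gaussianPDF 0 (Var[A; P] - cov[A, Y; P] ^ 2 / Var[Y; P]).toNNReal u *
        (ENNReal.ofReal h * ENNReal.ofReal √(Var[Y; P])) := by
  have := hAY.isProbabilityMeasure
  have hA := hAY.fst.memLp_two
  have hY := hAY.snd.memLp_two
  have hWY := hasGaussianLaw_linearResidual_prodMk hAY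
  have hind : IndepFun (linearResidual A Y P) Y P :=
    hWY.indepFun_of_covariance_eq_zero (covariance_linearResidual hA hY hvar)
  have hlaw : HasLaw (linearResidual A Y P)
      (gaussianReal 0 (Var[A; P] - cov[A, Y; P] ^ 2 / Var[Y; P]).toNNReal) P :=
    ⟨hWY.fst.aemeasurable, by
      rw [hWY.fst.map_eq_gaussianReal, variance_linearResidual hA hY,
        integral_linearResidual hAY.fst.integrable hAY.snd.integrable hA0 hY0]⟩
  have hsplit (ω : Ω) :
      linearResidual A Y P ω + cov[A, Y; P] / Var[Y; P] * Y ω = A ω := sub_add_cancel _ _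
  have hbound := measure_upcrossing_le_of_indepFun hind hlaw (Real.toNNReal_pos.2 hres).ne'
    hY.aemeasurable hh hslope hu
  simp only [add_mul, ← add_assoc, hsplit] at hbound
  grw [hbound, lintegral_enorm_le_sqrt_variance hY hY0]

end Gaussian

section MixedPartials

open Filter Topology

/-- The first partial derivative of `f : ℝ × ℝ → ℝ` relative to `S`, which unlike `deriv` is
meaningful at the boundary points of a rectangle `S`. -/
noncomputable def partialFst (S : Set (ℝ × ℝ)) (f : ℝ × ℝ → ℝ) (p : ℝ × ℝ) : ℝ :=
  fderivWithin ℝ f S p (1, 0)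

/-- The second partial derivative of `f : ℝ × ℝ → ℝ` relative to `S`; see `partialFst`. -/
noncomputable def partialSnd (S : Set (ℝ × ℝ)) (f : ℝ × ℝ → ℝ) (p : ℝ × ℝ) : ℝ :=
  fderivWithin ℝ f S p (0, 1)

lemma hasDerivWithinAt_partialFst {s t : Set ℝ} {f : ℝ × ℝ → ℝ} {x y : ℝ}
    (hf : DifferentiableWithinAt ℝ f (s ×ˢ t) (x, y)) (hy : y ∈ t) :
    HasDerivWithinAt (fun x' ↦ f (x', y)) (partialFst (s ×ˢ t) f (x, y)) s x :=
  have hmaps : MapsTo (fun x' ↦ (x', y)) s (s ×ˢ t) := fun _ hx ↦ ⟨hx, hy⟩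
  hf.hasFDerivWithinAt.comp_hasDerivWithinAt x
    ((hasDerivWithinAt_id x s).prodMk (hasDerivWithinAt_const x s y)) hmaps

lemma hasDerivWithinAt_partialSnd {s t : Set ℝ} {f : ℝ × ℝ → ℝ} {x y : ℝ}
    (hf : DifferentiableWithinAt ℝ f (s ×ˢ t) (x, y)) (hx : x ∈ s) :
    HasDerivWithinAt (fun y' ↦ f (x, y')) (partialSnd (s ×ˢ t) f (x, y)) t y :=
  have hmaps : MapsTo (fun y' ↦ (x, y')) t (s ×ˢ t) := fun _ hy ↦ ⟨hx, hy⟩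
  hf.hasFDerivWithinAt.comp_hasDerivWithinAt y
    ((hasDerivWithinAt_const y t x).prodMk (hasDerivWithinAt_id y t)) hmaps

lemma contDiffOn_partialFst {m n : WithTop ℕ∞} {S : Set (ℝ × ℝ)} {f : ℝ × ℝ → ℝ}
    (hf : ContDiffOn ℝ n f S) (hS : UniqueDiffOn ℝ S) (hmn : m + 1 ≤ n) :
    ContDiffOn ℝ m (partialFst S f) S :=
  (hf.fderivWithin hS hmn).clm_apply contDiffOn_const

lemma contDiffOn_partialSnd {m n : WithTop ℕ∞} {S : Set (ℝ × ℝ)} {f : ℝ × ℝ → ℝ}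
    (hf : ContDiffOn ℝ n f S) (hS : UniqueDiffOn ℝ S) (hmn : m + 1 ≤ n) :
    ContDiffOn ℝ m (partialSnd S f) S :=
  (hf.fderivWithin hS hmn).clm_apply contDiffOn_const

/-- At an endpoint of the rectangle the junk value of `deriv` is `0`, so a nonzero derivative is a
genuine one. -/
lemma deriv_eq_of_hasDerivWithinAt {s : Set ℝ} {f : ℝ → ℝ} {f' x : ℝ} (hs : UniqueDiffOn ℝ s)
    (hx : x ∈ s) (hf : HasDerivWithinAt f f' s x) (h : deriv f x ≠ 0) : deriv f x = f' :=
  (hs x hx).eq_deriv s (differentiableAt_of_deriv_ne_zero h).hasDerivAt.hasDerivWithinAt hf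

variable {a b : ℝ}

lemma continuousOn_diag {s : Set ℝ} {F : ℝ × ℝ → ℝ} (hF : ContinuousOn F (s ×ˢ s)) :
    ContinuousOn (fun t ↦ F (t, t)) s :=
  hF.comp (f := fun t ↦ (t, t)) (by fun_prop) fun _ ht ↦ ⟨ht, ht⟩

lemma exists_mem_Icc_div_eq_deriv {g g' : ℝ → ℝ}
    (hg : ∀ s ∈ Icc a b, HasDerivWithinAt g (g' s) (Icc a b) s) {t h : ℝ} (hh : 0 < h)
    (hat : a ≤ t) (htb : t + h ≤ b) :
    ∃ p ∈ Icc t (t + h), (g (t + h) - g t) / h = g' p := by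
  obtain ⟨p, hp, hgp⟩ := exists_hasDerivAt_eq_slope g g' (lt_add_of_pos_right t hh)
    (fun s hs ↦ (hg s ⟨hat.trans hs.1, hs.2.trans htb⟩).continuousWithinAt.mono
      (Icc_subset_Icc hat htb))
    (fun s hs ↦ (hg s ⟨hat.trans hs.1.le, hs.2.le.trans htb⟩).hasDerivAt
      (Icc_mem_nhds (hat.trans_lt hs.1) (hs.2.trans_le htb)))
  exact ⟨p, Ioo_subset_Icc_self hp, by rw [hgp, add_sub_cancel_left]⟩

/-- The pairs `(h, t)` of a step `h > 0` and a base point `t` with `[t, t + h] ⊆ [a, b]`. -/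
def incrementDomain (a b : ℝ) : Set (ℝ × ℝ) := {z | 0 < z.1 ∧ a ≤ z.2 ∧ z.2 + z.1 ≤ b}

lemma left_mem_Icc_of_mem_incrementDomain {h t : ℝ} (hz : (h, t) ∈ incrementDomain a b) :
    t ∈ Icc a b :=
  ⟨hz.2.1, (le_add_of_nonneg_right hz.1.le).trans hz.2.2⟩

lemma right_mem_Icc_of_mem_incrementDomain {h t : ℝ} (hz : (h, t) ∈ incrementDomain a b) :
    t + h ∈ Icc a b :=
  ⟨hz.2.1.trans (le_add_of_nonneg_right hz.1.le), hz.2.2⟩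

lemma tendsto_incrementDomain_of_forall_exists {F φ : ℝ × ℝ → ℝ} {t : ℝ}
    (hF : ContinuousOn F (Icc a b ×ˢ Icc a b)) (ht : t ∈ Icc a b)
    (hφ : ∀ z ∈ incrementDomain a b,
      ∃ p ∈ Icc z.2 (z.2 + z.1), ∃ q ∈ Icc z.2 (z.2 + z.1), φ z = F (p, q)) :
    Tendsto φ (𝓝[incrementDomain a b] (0, t)) (𝓝 (F (t, t))) := by
  choose! p hp q hq hφ using hφ
  have hsnd : Tendsto (fun z : ℝ × ℝ ↦ z.2) (𝓝[incrementDomain a b] (0, t)) (𝓝 t) :=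
    (continuous_snd.tendsto (0, t)).mono_left nhdsWithin_le_nhds
  have hend : Tendsto (fun z : ℝ × ℝ ↦ z.2 + z.1) (𝓝[incrementDomain a b] (0, t)) (𝓝 t) := by
    have hcont : Continuous fun z : ℝ × ℝ ↦ z.2 + z.1 := by fun_prop
    exact (hcont.tendsto' (0, t) t (add_zero t)).mono_left nhdsWithin_le_nhds
  have hsqueeze {x : ℝ × ℝ → ℝ}
      (hx : ∀ z ∈ incrementDomain a b, x z ∈ Icc z.2 (z.2 + z.1)) :
      Tendsto x (𝓝[incrementDomain a b] (0, t)) (𝓝[Icc a b] t) := by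
    refine tendsto_nhdsWithin_iff.2
      ⟨tendsto_of_tendsto_of_tendsto_of_le_of_le' hsnd hend ?_ ?_, ?_⟩ <;>
    filter_upwards [self_mem_nhdsWithin] with z hz
    exacts [(hx z hz).1, (hx z hz).2, ⟨hz.2.1.trans (hx z hz).1, (hx z hz).2.trans hz.2.2⟩]
  have hpq := (hsqueeze hp).prodMk (hsqueeze hq)
  rw [← nhdsWithin_prod_eq] at hpq
  refine ((hF (t, t) ⟨ht, ht⟩).tendsto.comp hpq).congr' ?_
  filter_upwards [self_mem_nhdsWithin] with z hz
  exact (hφ z hz).symm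

lemma eventually_forall_mem_incrementDomain {p : ℝ × ℝ → Prop}
    (hp : ∀ t ∈ Icc a b, ∀ᶠ z in 𝓝[incrementDomain a b] (0, t), p z) :
    ∀ᶠ h in 𝓝[>] 0, ∀ t, (h, t) ∈ incrementDomain a b → p (h, t) := by
  have hall : ∀ᶠ h in 𝓝 (0 : ℝ), ∀ t ∈ Icc a b, (h, t) ∈ incrementDomain a b → p (h, t) :=
    isCompact_Icc.eventually_forall_of_forall_eventually fun t ht ↦
      eventually_nhdsWithin_iff.1 (hp t ht)
  filter_upwards [nhdsWithin_le_nhds hall] with h hh t ht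
  exact hh t (left_mem_Icc_of_mem_incrementDomain ht) ht

end MixedPartials

section CovarianceDerivatives

open Filter Topology

variable {a b : ℝ} {r : ℝ → ℝ → ℝ} {t : ℝ}

/-- The paper's `r₁₀(t, t)`. -/
noncomputable def covDeriv₁₀ (r : ℝ → ℝ → ℝ) (t : ℝ) : ℝ := deriv (fun s ↦ r s t) t

/-- The paper's `r₁₁(t, t)`. -/
noncomputable def covDeriv₁₁ (r : ℝ → ℝ → ℝ) (t : ℝ) : ℝ :=
  deriv (fun s ↦ deriv (fun t' ↦ r s t') t) t

/-- The paper's `χ₂`. -/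
noncomputable def chiTwo (r : ℝ → ℝ → ℝ) (a b : ℝ) : ℝ :=
  sInf ((fun t ↦ covDeriv₁₀ r t ^ 2 / covDeriv₁₁ r t) '' Icc a b)

/-- With `z = (h, t)`: the covariance of `X t` and `(X (t + h) - X t) / h` for a process `X` with
covariance `r`. -/
noncomputable def incrementCov (r : ℝ → ℝ → ℝ) (z : ℝ × ℝ) : ℝ :=
  (r z.2 (z.2 + z.1) - r z.2 z.2) / z.1

/-- With `z = (h, t)`: the variance of `(X (t + h) - X t) / h` for a process `X` with
covariance `r`, arranged as an iterated difference quotient. -/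
noncomputable def incrementVar (r : ℝ → ℝ → ℝ) (z : ℝ × ℝ) : ℝ :=
  ((r (z.2 + z.1) (z.2 + z.1) - r (z.2 + z.1) z.2) / z.1 -
    (r z.2 (z.2 + z.1) - r z.2 z.2) / z.1) / z.1

/-- With `z = (h, t)`: the variance of the residual of `X t` on `(X (t + h) - X t) / h` for a
process `X` with covariance `r`. -/
noncomputable def residualVar (r : ℝ → ℝ → ℝ) (z : ℝ × ℝ) : ℝ :=
  r z.2 z.2 - incrementCov r z ^ 2 / incrementVar r z

/-- The bounds at `z = (h, t)` under which the probability of an up-crossing over `[t, t + h]` is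
estimated; `L` and `τ` only affect the constant, `c⁻¹` becomes the factor in the exponent. -/
structure IncrementBounds (r : ℝ → ℝ → ℝ) (L τ c : ℝ) (z : ℝ × ℝ) : Prop where
  incrementVar_pos : 0 < incrementVar r z
  incrementVar_le : incrementVar r z ≤ L
  slope_le : incrementCov r z / incrementVar r z + z.1 ≤ 0
  le_residualVar : τ ≤ residualVar r z
  residualVar_le : residualVar r z ≤ c

/-- The paper's `r₀₁` on `[a, b] × [a, b]`, with one-sided derivatives on the boundary. -/
noncomputable def covPartial₀₁ (r : ℝ → ℝ → ℝ) (a b : ℝ) : ℝ × ℝ → ℝ :=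
  partialSnd (Icc a b ×ˢ Icc a b) (Function.uncurry r)

/-- The paper's `r₁₁` on `[a, b] × [a, b]`, with one-sided derivatives on the boundary. -/
noncomputable def covPartial₁₁ (r : ℝ → ℝ → ℝ) (a b : ℝ) : ℝ × ℝ → ℝ :=
  partialFst (Icc a b ×ˢ Icc a b) (covPartial₀₁ r a b)

lemma uniqueDiffOn_Icc_prod_Icc (hab : a < b) : UniqueDiffOn ℝ (Icc a b ×ˢ Icc a b) :=
  (uniqueDiffOn_Icc hab).prod (uniqueDiffOn_Icc hab)

lemma contDiffOn_covPartial₀₁ (hab : a < b)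
    (hr : ContDiffOn ℝ 2 (Function.uncurry r) (Icc a b ×ˢ Icc a b)) :
    ContDiffOn ℝ 1 (covPartial₀₁ r a b) (Icc a b ×ˢ Icc a b) :=
  contDiffOn_partialSnd hr (uniqueDiffOn_Icc_prod_Icc hab) one_add_one_eq_two.le

lemma continuousOn_covPartial₁₁ (hab : a < b)
    (hr : ContDiffOn ℝ 2 (Function.uncurry r) (Icc a b ×ˢ Icc a b)) :
    ContinuousOn (covPartial₁₁ r a b) (Icc a b ×ˢ Icc a b) :=
  contDiffOn_zero.1 <| contDiffOn_partialFst (contDiffOn_covPartial₀₁ hab hr)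
    (uniqueDiffOn_Icc_prod_Icc hab) (zero_add 1).le

lemma hasDerivWithinAt_covPartial₀₁
    (hr : DifferentiableOn ℝ (Function.uncurry r) (Icc a b ×ˢ Icc a b)) {s t : ℝ}
    (hs : s ∈ Icc a b) (ht : t ∈ Icc a b) :
    HasDerivWithinAt (r s) (covPartial₀₁ r a b (s, t)) (Icc a b) t :=
  hasDerivWithinAt_partialSnd (hr _ ⟨hs, ht⟩) hs

lemma hasDerivWithinAt_covPartial₁₁ (hab : a < b)
    (hr : ContDiffOn ℝ 2 (Function.uncurry r) (Icc a b ×ˢ Icc a b)) {s t : ℝ} (hs : s ∈ Icc a b)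
    (ht : t ∈ Icc a b) :
    HasDerivWithinAt (fun s ↦ covPartial₀₁ r a b (s, t)) (covPartial₁₁ r a b (s, t))
      (Icc a b) s :=
  hasDerivWithinAt_partialFst
    ((contDiffOn_covPartial₀₁ hab hr).differentiableOn one_ne_zero _ ⟨hs, ht⟩) ht

lemma covDeriv₁₀_eq_covPartial₀₁ (hab : a < b) (hsymm : ∀ s t, r s t = r t s)
    (hr : DifferentiableOn ℝ (Function.uncurry r) (Icc a b ×ˢ Icc a b)) (ht : t ∈ Icc a b)
    (h10 : covDeriv₁₀ r t ≠ 0) : covDeriv₁₀ r t = covPartial₀₁ r a b (t, t) := by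
  rw [covDeriv₁₀, funext fun s ↦ hsymm s t] at h10 ⊢
  exact deriv_eq_of_hasDerivWithinAt (uniqueDiffOn_Icc hab) ht
    (hasDerivWithinAt_covPartial₀₁ hr ht ht) h10

lemma covDeriv₁₁_eq_covPartial₁₁ (hab : a < b) (hsymm : ∀ s t, r s t = r t s)
    (hr : ContDiffOn ℝ 2 (Function.uncurry r) (Icc a b ×ˢ Icc a b)) (ht : t ∈ Icc a b)
    (h10 : covDeriv₁₀ r t ≠ 0) (h11 : covDeriv₁₁ r t ≠ 0) :
    covDeriv₁₁ r t = covPartial₁₁ r a b (t, t) := by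
  have hI := uniqueDiffOn_Icc hab
  have hinner : DifferentiableAt ℝ (fun s ↦ deriv (r s) t) t :=
    differentiableAt_of_deriv_ne_zero h11
  have hdiag : deriv (r t) t ≠ 0 := by
    rwa [covDeriv₁₀, funext fun s ↦ hsymm s t] at h10
  have hpartial : ∀ s ∈ Icc a b, deriv (r s) t ≠ 0 → deriv (r s) t = covPartial₀₁ r a b (s, t) :=
    fun s hs ↦ deriv_eq_of_hasDerivWithinAt hI ht
      (hasDerivWithinAt_covPartial₀₁ (hr.differentiableOn two_ne_zero) hs ht)
  have hcongr : (fun s ↦ deriv (r s) t) =ᶠ[𝓝[Icc a b] t] fun s ↦ covPartial₀₁ r a b (s, t) := by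
    filter_upwards [nhdsWithin_le_nhds (hinner.continuousAt.eventually_ne hdiag),
      self_mem_nhdsWithin] with s hne hs
    exact hpartial s hs hne
  exact deriv_eq_of_hasDerivWithinAt hI ht
    ((hasDerivWithinAt_covPartial₁₁ hab hr ht ht).congr_of_eventuallyEq hcongr
      (hpartial t ht hdiag)) h11

lemma tendsto_incrementCov (hab : a < b)
    (hr : ContDiffOn ℝ 2 (Function.uncurry r) (Icc a b ×ˢ Icc a b)) (ht : t ∈ Icc a b) :
    Tendsto (incrementCov r) (𝓝[incrementDomain a b] (0, t)) (𝓝 (covPartial₀₁ r a b (t, t))) := by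
  refine tendsto_incrementDomain_of_forall_exists (contDiffOn_covPartial₀₁ hab hr).continuousOn ht
    fun z ⟨hpos, haz, hzb⟩ ↦ ?_
  obtain ⟨q, hq, hslope⟩ := exists_mem_Icc_div_eq_deriv
    (fun t' ht' ↦ hasDerivWithinAt_covPartial₀₁ (hr.differentiableOn two_ne_zero)
      ⟨haz, by linarith⟩ ht') hpos haz hzb
  exact ⟨z.2, ⟨le_rfl, by linarith⟩, q, hq, hslope⟩

lemma tendsto_incrementVar (hab : a < b)
    (hr : ContDiffOn ℝ 2 (Function.uncurry r) (Icc a b ×ˢ Icc a b)) (ht : t ∈ Icc a b) :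
    Tendsto (incrementVar r) (𝓝[incrementDomain a b] (0, t)) (𝓝 (covPartial₁₁ r a b (t, t))) := by
  refine tendsto_incrementDomain_of_forall_exists (continuousOn_covPartial₁₁ hab hr) ht
    fun z ⟨hpos, haz, hzb⟩ ↦ ?_
  have hfirst {s : ℝ} (hs : s ∈ Icc a b) (t' : ℝ) (ht' : t' ∈ Icc a b) :=
    hasDerivWithinAt_covPartial₀₁ (hr.differentiableOn two_ne_zero) hs ht'
  have hinner : ∀ t' ∈ Icc a b, HasDerivWithinAt (fun t' ↦ (r (z.2 + z.1) t' - r z.2 t') / z.1)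
      ((covPartial₀₁ r a b (z.2 + z.1, t') - covPartial₀₁ r a b (z.2, t')) / z.1) (Icc a b) t' :=
    fun t' ht' ↦ ((hfirst ⟨by linarith, hzb⟩ t' ht').sub
      (hfirst ⟨haz, by linarith⟩ t' ht')).div_const _
  obtain ⟨q, hq, hslope⟩ := exists_mem_Icc_div_eq_deriv hinner hpos haz hzb
  obtain ⟨p, hp, hslope'⟩ := exists_mem_Icc_div_eq_deriv
    (fun s hs ↦ hasDerivWithinAt_covPartial₁₁ hab hr hs ⟨haz.trans hq.1, hq.2.trans hzb⟩)
    hpos haz hzb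
  refine ⟨p, hp, q, hq, ?_⟩
  rw [← hslope', ← hslope, incrementVar]
  ring

lemma tendsto_residualVar (hab : a < b)
    (hr : ContDiffOn ℝ 2 (Function.uncurry r) (Icc a b ×ˢ Icc a b)) (ht : t ∈ Icc a b)
    (h11 : covPartial₁₁ r a b (t, t) ≠ 0) :
    Tendsto (residualVar r) (𝓝[incrementDomain a b] (0, t))
      (𝓝 (r t t - covPartial₀₁ r a b (t, t) ^ 2 / covPartial₁₁ r a b (t, t))) := by
  have hvar : Tendsto (fun z : ℝ × ℝ ↦ r z.2 z.2) (𝓝[incrementDomain a b] (0, t)) (𝓝 (r t t)) :=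
    tendsto_incrementDomain_of_forall_exists hr.continuousOn ht fun z hz ↦
      have hz2 : z.2 ∈ Icc z.2 (z.2 + z.1) := ⟨le_rfl, by linarith [hz.1]⟩
      ⟨z.2, hz2, z.2, hz2, rfl⟩
  exact hvar.sub (((tendsto_incrementCov hab hr ht).pow 2).div (tendsto_incrementVar hab hr ht) h11)

lemma exists_eventually_incrementBounds {c : ℝ} (hab : a < b)
    (hr : ContDiffOn ℝ 2 (Function.uncurry r) (Icc a b ×ˢ Icc a b))
    (h01 : ∀ t ∈ Icc a b, covPartial₀₁ r a b (t, t) < 0)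
    (h11 : ∀ t ∈ Icc a b, 0 < covPartial₁₁ r a b (t, t))
    (hpos : ∀ t ∈ Icc a b,
      0 < r t t - covPartial₀₁ r a b (t, t) ^ 2 / covPartial₁₁ r a b (t, t))
    (hlt : ∀ t ∈ Icc a b,
      r t t - covPartial₀₁ r a b (t, t) ^ 2 / covPartial₁₁ r a b (t, t) < c) :
    ∃ L > 0, ∃ τ > 0, ∀ᶠ h in 𝓝[>] 0, ∀ t, (h, t) ∈ incrementDomain a b →
      IncrementBounds r L τ c (h, t) := by
  have hcont11 := continuousOn_diag (continuousOn_covPartial₁₁ hab hr)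
  have hcont01 := continuousOn_diag (contDiffOn_covPartial₀₁ hab hr).continuousOn
  have hcontRes := (continuousOn_diag hr.continuousOn).sub
    ((hcont01.pow 2).div hcont11 fun t ht ↦ (h11 t ht).ne')
  obtain ⟨M, hM⟩ := isCompact_Icc.bddAbove_image hcont11
  obtain ⟨m, hm, hmle⟩ := isCompact_Icc.exists_forall_le' hcontRes hpos
  obtain ⟨τ, hτ, hτm⟩ := exists_between hm
  refine ⟨max M 0 + 1, by positivity, τ, hτ,
    eventually_forall_mem_incrementDomain fun t ht ↦ ?_⟩
  have hvar := tendsto_incrementVar hab hr ht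
  have hres := tendsto_residualVar hab hr ht (h11 t ht).ne'
  have hslope : Tendsto (fun z ↦ incrementCov r z / incrementVar r z + z.1)
      (𝓝[incrementDomain a b] (0, t))
      (𝓝 (covPartial₀₁ r a b (t, t) / covPartial₁₁ r a b (t, t) + 0)) :=
    ((tendsto_incrementCov hab hr ht).div hvar (h11 t ht).ne').add
      ((continuous_fst.tendsto ((0, t) : ℝ × ℝ)).mono_left nhdsWithin_le_nhds)
  filter_upwards [hvar.eventually_const_lt (h11 t ht),
    hvar.eventually_lt_const (((hM ⟨t, ht, rfl⟩).trans (le_max_left M 0)).trans_lt (lt_add_one _)),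
    hslope.eventually_lt_const (by simpa using div_neg_of_neg_of_pos (h01 t ht) (h11 t ht)),
    hres.eventually_const_lt (hτm.trans_le (hmle t ht)),
    hres.eventually_lt_const (hlt t ht)] with z hvarpos hvarle hslope hτle hlec
  exact ⟨hvarpos, hvarle.le, hslope.le, hτle.le, hlec.le⟩

lemma continuousOn_covDeriv_sq_div (hab : a < b) (hsymm : ∀ s t, r s t = r t s)
    (hr : ContDiffOn ℝ 2 (Function.uncurry r) (Icc a b ×ˢ Icc a b))
    (h10 : ∀ t ∈ Icc a b, covDeriv₁₀ r t < 0) (h11 : ∀ t ∈ Icc a b, 0 < covDeriv₁₁ r t) :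
    ContinuousOn (fun t ↦ covDeriv₁₀ r t ^ 2 / covDeriv₁₁ r t) (Icc a b) := by
  have hcont10 : ContinuousOn (covDeriv₁₀ r) (Icc a b) :=
    (continuousOn_diag (contDiffOn_covPartial₀₁ hab hr).continuousOn).congr fun t ht ↦
      covDeriv₁₀_eq_covPartial₀₁ hab hsymm (hr.differentiableOn two_ne_zero) ht (h10 t ht).ne
  have hcont11 : ContinuousOn (covDeriv₁₁ r) (Icc a b) :=
    (continuousOn_diag (continuousOn_covPartial₁₁ hab hr)).congr fun t ht ↦
      covDeriv₁₁_eq_covPartial₁₁ hab hsymm hr ht (h10 t ht).ne (h11 t ht).ne'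
  exact (hcont10.pow 2).div hcont11 fun t ht ↦ (h11 t ht).ne'

lemma chiTwo_le (hcont : ContinuousOn (fun t ↦ covDeriv₁₀ r t ^ 2 / covDeriv₁₁ r t) (Icc a b))
    (ht : t ∈ Icc a b) : chiTwo r a b ≤ covDeriv₁₀ r t ^ 2 / covDeriv₁₁ r t :=
  csInf_le (isCompact_Icc.image_of_continuousOn hcont).bddBelow (mem_image_of_mem _ ht)

lemma chiTwo_pos (hab : a ≤ b)
    (hcont : ContinuousOn (fun t ↦ covDeriv₁₀ r t ^ 2 / covDeriv₁₁ r t) (Icc a b))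
    (hpos : ∀ t ∈ Icc a b, 0 < covDeriv₁₀ r t ^ 2 / covDeriv₁₁ r t) : 0 < chiTwo r a b := by
  obtain ⟨m, hm, hmle⟩ := isCompact_Icc.exists_forall_le' hcont hpos
  exact hm.trans_le (le_csInf ((nonempty_Icc.2 hab).image _) (forall_mem_image.2 hmle))

end CovarianceDerivatives

section UpcrossingCount

open Filter Topology

variable {f : ℝ → ℝ} {a b u : ℝ}

/-- The points at which `f` up-crosses the level `u` on `[a, b]`; the paper's `N_u⁺([a, b])` is the
cardinality of this set. -/
def upcrossingSet (f : ℝ → ℝ) (a b u : ℝ) : Set ℝ :=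
  {t ∈ Icc a b | f t = u ∧ 0 < derivWithin f (Icc a b) t}

/-- The `i`-th of the points that divide `[a, b]` into `n` intervals of equal length. -/
noncomputable def gridPoint (a b : ℝ) (n i : ℕ) : ℝ := a + i * ((b - a) / n)

/-- The indices of the cells of the `n`-th grid of `[a, b]` over which `f` passes from below `u` to
`u` or above; a discrete version of `upcrossingSet`. -/
noncomputable def gridUpcrossings (f : ℝ → ℝ) (a b u : ℝ) (n : ℕ) : Finset ℕ :=
  {i ∈ Finset.range n | f (gridPoint a b n i) < u ∧ u ≤ f (gridPoint a b n (i + 1))}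

lemma eventually_lt_and_le_of_derivWithin_pos {s : Set ℝ} {t : ℝ} (hd : 0 < derivWithin f s t) :
    ∀ᶠ x in 𝓝[s] t, (x < t → f x < f t) ∧ (t ≤ x → f t ≤ f x) := by
  have hslope := hasDerivWithinAt_iff_tendsto_slope.1
    (differentiableWithinAt_of_derivWithin_ne_zero hd.ne').hasDerivWithinAt
  rw [sdiff_eq, nhdsWithin_inter'] at hslope
  filter_upwards [eventually_inf_principal.1 (hslope.eventually_const_lt hd)] with x hx
  refine ⟨fun hxt ↦ (slope_pos_iff_gt hxt).1 (hx hxt.ne), fun htx ↦ ?_⟩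
  rcases htx.eq_or_lt with rfl | htx
  · exact le_rfl
  · exact ((slope_pos_iff htx).1 (hx htx.ne')).le

lemma gridPoint_zero (a b : ℝ) (n : ℕ) : gridPoint a b n 0 = a := by simp [gridPoint]

lemma gridPoint_self (a b : ℝ) {n : ℕ} (hn : n ≠ 0) : gridPoint a b n n = b := by
  rw [gridPoint, mul_div_cancel₀ _ (Nat.cast_ne_zero.2 hn), add_sub_cancel]

lemma gridPoint_succ (a b : ℝ) (n i : ℕ) :
    gridPoint a b n (i + 1) = gridPoint a b n i + (b - a) / n := by
  rw [gridPoint, gridPoint, Nat.cast_succ]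
  ring

lemma monotone_gridPoint (hab : a ≤ b) (n : ℕ) : Monotone (gridPoint a b n) :=
  monotone_nat_of_le_succ fun i ↦ by
    rw [gridPoint_succ]
    exact le_add_of_nonneg_right (div_nonneg (sub_nonneg.2 hab) n.cast_nonneg)

lemma gridPoint_mem_Icc (hab : a ≤ b) {n i : ℕ} (hi : i ≤ n) : gridPoint a b n i ∈ Icc a b := by
  have hle : gridPoint a b n n ≤ b := by
    rcases eq_or_ne n 0 with rfl | hn
    · exact (gridPoint_zero a b 0).trans_le hab
    · exact (gridPoint_self a b hn).le
  exact ⟨(gridPoint_zero a b n).symm.trans_le (monotone_gridPoint hab n i.zero_le),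
    (monotone_gridPoint hab n hi).trans hle⟩

lemma exists_mem_Ioc_gridPoint (hab : a ≤ b) {n : ℕ} (hn : n ≠ 0) {t : ℝ} (ht : t ∈ Ioc a b) :
    ∃ i < n, t ∈ Ioc (gridPoint a b n i) (gridPoint a b n (i + 1)) := by
  have hunion := (monotone_gridPoint hab n).biUnion_Ico_Ioc_map_succ 0 n
  rw [gridPoint_zero, gridPoint_self a b hn] at hunion
  obtain ⟨i, hi, hti⟩ := mem_iUnion₂.1 (hunion ▸ ht)
  exact ⟨i, hi.2, hti⟩

lemma eventually_forall_mem_Icc_of_eventually_nhdsWithin {t : ℝ} {p : ℝ → Prop}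
    (hp : ∀ᶠ x in 𝓝[Icc a b] t, p x) :
    ∀ᶠ n : ℕ in atTop, ∀ x ∈ Icc a b, |x - t| ≤ (b - a) / n → p x := by
  obtain ⟨ε, hε, hball⟩ := Metric.mem_nhdsWithin_iff.1 hp
  filter_upwards [(tendsto_const_div_atTop_nhds_zero_nat (b - a)).eventually_lt_const hε]
    with n hn x hx hxt
  exact hball ⟨hxt.trans_lt hn, hx⟩

/-- For a fine grid distinct up-crossings lie in distinct cells: an up-crossing is preceded by
values below `u` on a whole cell length. -/
lemma eventually_card_le_card_gridUpcrossings (hab : a ≤ b) (hfa : f a ≠ u) {F : Finset ℝ}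
    (hF : ↑F ⊆ upcrossingSet f a b u) :
    ∀ᶠ n in atTop, F.card ≤ (gridUpcrossings f a b u n).card := by
  have hsign : ∀ᶠ n : ℕ in atTop, ∀ t ∈ F, ∀ x ∈ Icc a b, |x - t| ≤ (b - a) / n →
      (x < t → f x < u) ∧ (t ≤ x → u ≤ f x) := by
    refine (eventually_all_finset F).2 fun t ht ↦ ?_
    obtain ⟨-, rfl, hd⟩ := hF ht
    exact eventually_forall_mem_Icc_of_eventually_nhdsWithin
      (eventually_lt_and_le_of_derivWithin_pos hd)
  filter_upwards [hsign, eventually_ne_atTop 0] with n hsign hn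
  have hcell : ∀ t ∈ F, ∃ i < n, t ∈ Ioc (gridPoint a b n i) (gridPoint a b n (i + 1)) :=
    fun t ht ↦ exists_mem_Ioc_gridPoint hab hn
      ⟨(hF ht).1.1.lt_of_ne fun h ↦ hfa (h ▸ (hF ht).2.1), (hF ht).1.2⟩
  choose! cell hlt hmem using hcell
  refine Finset.card_le_card_of_injOn cell (fun t ht ↦ ?_) fun t ht t' ht' heq ↦ ?_
  · have ht : t ∈ F := ht
    have hgrid := gridPoint_succ a b n (cell t)
    obtain ⟨hleft, hright⟩ := hmem t ht
    refine Finset.mem_coe.2 (Finset.mem_filter.2 ⟨Finset.mem_range.2 (hlt t ht), ?_, ?_⟩)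
    · exact (hsign t ht _ (gridPoint_mem_Icc hab (hlt t ht).le)
        (abs_le.2 ⟨by linarith, by linarith⟩)).1 hleft
    · exact (hsign t ht _ (gridPoint_mem_Icc hab (hlt t ht))
        (abs_le.2 ⟨by linarith, by linarith⟩)).2 hright
  · have hnot_lt : ∀ t ∈ F, ∀ t' ∈ F, cell t = cell t' → ¬ t < t' := by
      intro t ht t' ht' heq htt'
      have hgrid := gridPoint_succ a b n (cell t)
      have hleft := (hmem t ht).1
      have hright := heq ▸ (hmem t' ht').2
      exact ((hsign t' ht' t (hF ht).1 (abs_le.2 ⟨by linarith, by linarith⟩)).1 htt').ne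
        (hF ht).2.1
    exact le_antisymm (not_lt.1 (hnot_lt t' ht' t ht heq.symm)) (not_lt.1 (hnot_lt t ht t' ht' heq))

lemma toENNReal_le_of_forall_natCast_le {m : ℕ∞} {x : ENNReal}
    (h : ∀ k : ℕ, (k : ℕ∞) ≤ m → (k : ENNReal) ≤ x) : (m : ENNReal) ≤ x := by
  induction m with
  | top => rw [ENat.toENNReal_top, ← ENNReal.iSup_natCast]; exact iSup_le fun k ↦ h k le_top
  | coe k => exact h k le_rfl

lemma encard_upcrossingSet_le_liminf (hab : a ≤ b) (hfa : f a ≠ u) :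
    ((upcrossingSet f a b u).encard : ENNReal) ≤
      liminf (fun n ↦ ((gridUpcrossings f a b u n).card : ENNReal)) atTop := by
  refine toENNReal_le_of_forall_natCast_le fun k hk ↦ ?_
  obtain ⟨F, hF, hcard⟩ := exists_subset_encard_eq hk
  lift F to Finset ℝ using finite_of_encard_eq_coe hcard
  rw [encard_coe_eq_coe_finsetCard, Nat.cast_inj] at hcard
  refine le_liminf_of_le (by isBoundedDefault) ?_
  filter_upwards [eventually_card_le_card_gridUpcrossings hab hfa hF] with n hn
  exact_mod_cast hcard ▸ hn

variable {Ω : Type*} {X : ℝ → Ω → ℝ}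

lemma card_gridUpcrossings_eq_sum_indicator (n : ℕ) :
    (fun ω ↦ ((gridUpcrossings (X · ω) a b u n).card : ENNReal)) = fun ω ↦
      ∑ i ∈ Finset.range n,
        {ω | X (gridPoint a b n i) ω < u ∧ u ≤ X (gridPoint a b n (i + 1)) ω}.indicator 1 ω := by
  simp only [gridUpcrossings, Finset.card_filter, indicator_apply, mem_ofPred_eq, Pi.one_apply,
    Nat.cast_sum, Nat.cast_ite, Nat.cast_one, Nat.cast_zero]

variable [MeasurableSpace Ω] {P : Measure Ω}

lemma nullMeasurableSet_upcrossing {A B : Ω → ℝ} (hA : AEMeasurable A P) (hB : AEMeasurable B P) :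
    NullMeasurableSet {ω | A ω < u ∧ u ≤ B ω} P :=
  (nullMeasurableSet_lt hA aemeasurable_const).inter (nullMeasurableSet_le aemeasurable_const hB)

lemma nullMeasurableSet_gridUpcrossing (hab : a ≤ b) (hX : ∀ t ∈ Icc a b, AEMeasurable (X t) P)
    {n i : ℕ} (hi : i ∈ Finset.range n) : NullMeasurableSet
      {ω | X (gridPoint a b n i) ω < u ∧ u ≤ X (gridPoint a b n (i + 1)) ω} P :=
  have hin := Finset.mem_range.1 hi
  nullMeasurableSet_upcrossing (hX _ (gridPoint_mem_Icc hab hin.le))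
    (hX _ (gridPoint_mem_Icc hab hin))

lemma aemeasurable_card_gridUpcrossings (hab : a ≤ b)
    (hX : ∀ t ∈ Icc a b, AEMeasurable (X t) P) (n : ℕ) :
    AEMeasurable (fun ω ↦ ((gridUpcrossings (X · ω) a b u n).card : ENNReal)) P := by
  rw [card_gridUpcrossings_eq_sum_indicator]
  exact Finset.aemeasurable_fun_sum _ fun i hi ↦
    aemeasurable_one.indicator₀ (nullMeasurableSet_gridUpcrossing hab hX hi)

lemma lintegral_card_gridUpcrossings (hab : a ≤ b) (hX : ∀ t ∈ Icc a b, AEMeasurable (X t) P)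
    (n : ℕ) :
    ∫⁻ ω, ((gridUpcrossings (X · ω) a b u n).card : ENNReal) ∂P = ∑ i ∈ Finset.range n,
      P {ω | X (gridPoint a b n i) ω < u ∧ u ≤ X (gridPoint a b n (i + 1)) ω} := by
  rw [card_gridUpcrossings_eq_sum_indicator]
  refine (lintegral_finsetSum' _ fun i hi ↦ ?_).trans (Finset.sum_congr rfl fun i hi ↦ ?_)
  · exact aemeasurable_one.indicator₀ (nullMeasurableSet_gridUpcrossing hab hX hi)
  · exact lintegral_indicator_one₀ (nullMeasurableSet_gridUpcrossing hab hX hi)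

lemma lintegral_card_gridUpcrossings_le {K : ℝ} (hab : a < b)
    (hX : ∀ t ∈ Icc a b, AEMeasurable (X t) P) {n : ℕ} (hn : n ≠ 0)
    (hK : ∀ t, ((b - a) / n, t) ∈ incrementDomain a b →
      P {ω | X t ω < u ∧ u ≤ X (t + (b - a) / n) ω} ≤ ENNReal.ofReal ((b - a) / n * K)) :
    ∫⁻ ω, ((gridUpcrossings (X · ω) a b u n).card : ENNReal) ∂P ≤ ENNReal.ofReal ((b - a) * K) :=
  calc ∫⁻ ω, ((gridUpcrossings (X · ω) a b u n).card : ENNReal) ∂P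
    _ = ∑ i ∈ Finset.range n,
          P {ω | X (gridPoint a b n i) ω < u ∧ u ≤ X (gridPoint a b n (i + 1)) ω} :=
        lintegral_card_gridUpcrossings hab.le hX n
    _ ≤ ∑ _i ∈ Finset.range n, ENNReal.ofReal ((b - a) / n * K) := by
        refine Finset.sum_le_sum fun i hi ↦ ?_
        have hin := Finset.mem_range.1 hi
        have hlast := (gridPoint_mem_Icc hab.le (Nat.succ_le_of_lt hin)).2
        rw [gridPoint_succ] at hlast ⊢
        exact hK _ ⟨div_pos (sub_pos.2 hab) (Nat.cast_pos.2 hn.bot_lt),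
          (gridPoint_mem_Icc hab.le hin.le).1, hlast⟩
    _ = ENNReal.ofReal ((b - a) * K) := by
        rw [Finset.sum_const, Finset.card_range, ← ENNReal.ofReal_nsmul, nsmul_eq_mul, ← mul_assoc,
          mul_div_cancel₀ _ (Nat.cast_ne_zero.2 hn)]

lemma lintegral_encard_upcrossingSet_le {K : ℝ} (hab : a < b)
    (hX : ∀ t ∈ Icc a b, AEMeasurable (X t) P) (ha : ∀ᵐ ω ∂P, X a ω ≠ u)
    (hK : ∀ᶠ h in 𝓝[>] 0, ∀ t, (h, t) ∈ incrementDomain a b →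
      P {ω | X t ω < u ∧ u ≤ X (t + h) ω} ≤ ENNReal.ofReal (h * K)) :
    ∫⁻ ω, ((upcrossingSet (X · ω) a b u).encard : ENNReal) ∂P ≤ ENNReal.ofReal ((b - a) * K) := by
  have hmesh : Tendsto (fun n : ℕ ↦ (b - a) / n) atTop (𝓝[>] 0) := by
    refine tendsto_nhdsWithin_iff.2 ⟨tendsto_const_div_atTop_nhds_zero_nat _, ?_⟩
    filter_upwards [eventually_gt_atTop 0] with n hn
    exact div_pos (sub_pos.2 hab) (Nat.cast_pos.2 hn)
  have hgrid : ∀ᶠ n in atTop, ∫⁻ ω, ((gridUpcrossings (X · ω) a b u n).card : ENNReal) ∂P ≤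
      ENNReal.ofReal ((b - a) * K) := by
    filter_upwards [hmesh.eventually hK, eventually_ne_atTop 0] with n hKn hn
    exact lintegral_card_gridUpcrossings_le hab hX hn hKn
  calc ∫⁻ ω, ((upcrossingSet (X · ω) a b u).encard : ENNReal) ∂P
    _ ≤ ∫⁻ ω, liminf (fun n ↦ ((gridUpcrossings (X · ω) a b u n).card : ENNReal)) atTop ∂P :=
        lintegral_mono_ae (ha.mono fun ω hω ↦ encard_upcrossingSet_le_liminf hab.le hω)
    _ ≤ liminf (fun n ↦ ∫⁻ ω, ((gridUpcrossings (X · ω) a b u n).card : ENNReal) ∂P) atTop :=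
        lintegral_liminf_le' (aemeasurable_card_gridUpcrossings hab.le hX)
    _ ≤ ENNReal.ofReal ((b - a) * K) := liminf_le_of_frequently_le' hgrid.frequently

lemma integral_ncard_le_of_lintegral_encard_le {α : Type*} {S : Ω → Set α} {C : ℝ} (hC : 0 ≤ C)
    (h : ∫⁻ ω, ((S ω).encard : ENNReal) ∂P ≤ ENNReal.ofReal C) :
    ∫ ω, ((S ω).ncard : ℝ) ∂P ≤ C := by
  have hle (ω : Ω) : ‖((S ω).ncard : ℝ)‖ₑ ≤ ((S ω).encard : ENNReal) := by
    rw [Real.enorm_natCast, ← ENat.toENNReal_coe, ENat.toENNReal_le]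
    exact ENat.natCast_toNat_le_self _
  rw [← ENNReal.ofReal_le_ofReal_iff hC]
  calc ENNReal.ofReal (∫ ω, ((S ω).ncard : ℝ) ∂P)
    _ ≤ ‖∫ ω, ((S ω).ncard : ℝ) ∂P‖ₑ := Real.ofReal_le_enorm _
    _ ≤ ∫⁻ ω, ‖((S ω).ncard : ℝ)‖ₑ ∂P := enorm_integral_le_lintegral_enorm _
    _ ≤ ∫⁻ ω, ((S ω).encard : ENNReal) ∂P := lintegral_mono hle
    _ ≤ ENNReal.ofReal C := h

end UpcrossingCount

section GaussianProcess

open Filter Topology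

variable {r : ℝ → ℝ → ℝ} {a b : ℝ}

lemma sub_lt_inv_one_add {v q χ : ℝ} (hv : v ≤ 1) (hχ : 0 < χ) (hχq : χ ≤ q) :
    v - q < (1 + χ)⁻¹ :=
  calc v - q ≤ 1 - χ := sub_le_sub hv hχq
    _ < (1 + χ)⁻¹ := by
      rw [← one_div, lt_div_iff₀ (by positivity)]
      nlinarith

/-- A residual variance below `(1 + χ₂)⁻¹` is what produces the exponent `1 + χ₂`. -/
lemma exists_eventually_incrementBounds_chiTwo (hab : a < b) (hsymm : ∀ s t, r s t = r t s)
    (hr : ContDiffOn ℝ 2 (Function.uncurry r) (Icc a b ×ˢ Icc a b))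
    (hpos : ∀ t ∈ Icc a b, 0 < r t t) (hle : ∀ t ∈ Icc a b, r t t ≤ 1)
    (h10 : ∀ t ∈ Icc a b, covDeriv₁₀ r t < 0) (h11 : ∀ t ∈ Icc a b, 0 < covDeriv₁₁ r t)
    (hres : ∀ t ∈ Icc a b, 0 < covDeriv₁₁ r t - covDeriv₁₀ r t ^ 2 / r t t)
    (hχ : 0 < chiTwo r a b) :
    ∃ L > 0, ∃ τ > 0, ∀ᶠ h in 𝓝[>] 0, ∀ t, (h, t) ∈ incrementDomain a b →
      IncrementBounds r L τ (1 + chiTwo r a b)⁻¹ (h, t) := by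
  have heq10 : ∀ t ∈ Icc a b, covDeriv₁₀ r t = covPartial₀₁ r a b (t, t) := fun t ht ↦
    covDeriv₁₀_eq_covPartial₀₁ hab hsymm (hr.differentiableOn two_ne_zero) ht (h10 t ht).ne
  have heq11 : ∀ t ∈ Icc a b, covDeriv₁₁ r t = covPartial₁₁ r a b (t, t) := fun t ht ↦
    covDeriv₁₁_eq_covPartial₁₁ hab hsymm hr ht (h10 t ht).ne (h11 t ht).ne'
  refine exists_eventually_incrementBounds hab hr (fun t ht ↦ heq10 t ht ▸ h10 t ht)
    (fun t ht ↦ heq11 t ht ▸ h11 t ht) (fun t ht ↦ ?_) fun t ht ↦ ?_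
  · have hres := hres t ht
    rw [sub_pos, div_lt_iff₀ (hpos t ht)] at hres
    rw [← heq10 t ht, ← heq11 t ht, sub_pos, div_lt_iff₀ (h11 t ht), mul_comm]
    exact hres
  · rw [← heq10 t ht, ← heq11 t ht]
    exact sub_lt_inv_one_add (hle t ht) hχ
      (chiTwo_le (continuousOn_covDeriv_sq_div hab hsymm hr h10 h11) ht)

variable {Ω : Type*} [MeasurableSpace Ω] {P : Measure Ω} {X : ℝ → Ω → ℝ} {h t : ℝ}

/-- The difference quotient of the process `X` over `[t, t + h]`, which replaces the derivative of
the paths. -/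
noncomputable def incrementQuotient (X : ℝ → Ω → ℝ) (t h : ℝ) (ω : Ω) : ℝ :=
  (X (t + h) ω - X t ω) / h

lemma integral_incrementQuotient (ht : Integrable (X t) P) (hth : Integrable (X (t + h)) P)
    (ht0 : P[X t] = 0) (hth0 : P[X (t + h)] = 0) : P[incrementQuotient X t h] = 0 := by
  unfold incrementQuotient
  rw [integral_div, integral_sub hth ht, ht0, hth0, sub_zero, zero_div]

lemma hasGaussianLaw_prodMk_incrementQuotient
    (hG : HasGaussianLaw (fun ω ↦ (X t ω, X (t + h) ω)) P) :
    HasGaussianLaw (fun ω ↦ (X t ω, incrementQuotient X t h ω)) P := by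
  simpa [incrementQuotient, div_eq_inv_mul] using
    hG.map_fun ((ContinuousLinearMap.fst ℝ ℝ ℝ).prod
      (h⁻¹ • (ContinuousLinearMap.snd ℝ ℝ ℝ - ContinuousLinearMap.fst ℝ ℝ ℝ)))

lemma covariance_incrementQuotient [IsFiniteMeasure P] (hX : ∀ t ∈ Icc a b, MemLp (X t) 2 P)
    (hcov : ∀ s ∈ Icc a b, ∀ t ∈ Icc a b, cov[X s, X t; P] = r s t)
    (hz : (h, t) ∈ incrementDomain a b) :
    cov[X t, incrementQuotient X t h; P] = incrementCov r (h, t) := by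
  have ht := left_mem_Icc_of_mem_incrementDomain hz
  have hth := right_mem_Icc_of_mem_incrementDomain hz
  unfold incrementQuotient
  rw [covariance_fun_div_right, covariance_fun_sub_right (hX _ ht) (hX _ hth) (hX _ ht),
    hcov _ ht _ hth, hcov _ ht _ ht, incrementCov]

lemma variance_incrementQuotient [IsFiniteMeasure P] (hX : ∀ t ∈ Icc a b, MemLp (X t) 2 P)
    (hcov : ∀ s ∈ Icc a b, ∀ t ∈ Icc a b, cov[X s, X t; P] = r s t)
    (hz : (h, t) ∈ incrementDomain a b) :
    Var[incrementQuotient X t h; P] = incrementVar r (h, t) := by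
  have ht := left_mem_Icc_of_mem_incrementDomain hz
  have hth := right_mem_Icc_of_mem_incrementDomain hz
  have hXt := hX _ ht
  have hXth := hX _ hth
  unfold incrementQuotient
  rw [← covariance_self (X := fun ω ↦ (X (t + h) ω - X t ω) / h)
      ((hXth.aemeasurable.sub hXt.aemeasurable).div_const h),
    covariance_fun_div_right, covariance_fun_div_left,
    covariance_fun_sub_fun_sub hXth hXt hXth hXt, hcov _ hth _ hth, hcov _ hth _ ht,
    hcov _ ht _ hth, hcov _ ht _ ht, incrementVar]
  ring

lemma variance_sub_eq_residualVar [IsFiniteMeasure P] (hX : ∀ t ∈ Icc a b, MemLp (X t) 2 P)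
    (hcov : ∀ s ∈ Icc a b, ∀ t ∈ Icc a b, cov[X s, X t; P] = r s t)
    (hz : (h, t) ∈ incrementDomain a b) :
    Var[X t; P] - cov[X t, incrementQuotient X t h; P] ^ 2 / Var[incrementQuotient X t h; P] =
      residualVar r (h, t) := by
  have ht := left_mem_Icc_of_mem_incrementDomain hz
  rw [covariance_incrementQuotient hX hcov hz, variance_incrementQuotient hX hcov hz,
    ← covariance_self (hX t ht).aemeasurable, hcov t ht t ht, residualVar]

lemma gaussianPDFReal_residualVar_mul_le {L τ c : ℝ} {z : ℝ × ℝ} (hτ : 0 < τ) (hc : 0 < c)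
    (hbounds : IncrementBounds r L τ c⁻¹ z) (u : ℝ) :
    gaussianPDFReal 0 (residualVar r z).toNNReal u * √(incrementVar r z) ≤
      √L * (√(2 * Real.pi * τ))⁻¹ * Real.exp (-(u ^ 2) * c / 2) := by
  have hcoe : ((residualVar r z).toNNReal : ℝ) = residualVar r z :=
    Real.coe_toNNReal _ (hτ.le.trans hbounds.le_residualVar)
  have hdensity : gaussianPDFReal 0 (residualVar r z).toNNReal u ≤
      (√(2 * Real.pi * τ))⁻¹ * Real.exp (-(u ^ 2) * c / 2) :=
    gaussianPDFReal_zero_le hτ (hbounds.le_residualVar.trans_eq hcoe.symm)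
      (hcoe.symm ▸ (le_div_iff₀ hc).1 (hbounds.residualVar_le.trans_eq (one_div c).symm)) u
  rw [mul_assoc, mul_comm √L]
  gcongr
  exact hbounds.incrementVar_le

lemma measure_upcrossing_increment_le {L τ c u : ℝ}
    (hG : ∀ s ∈ Icc a b, ∀ t ∈ Icc a b, HasGaussianLaw (fun ω ↦ (X s ω, X t ω)) P)
    (hmean : ∀ t ∈ Icc a b, P[X t] = 0)
    (hcov : ∀ s ∈ Icc a b, ∀ t ∈ Icc a b, cov[X s, X t; P] = r s t)
    (hz : (h, t) ∈ incrementDomain a b) (hu : 0 ≤ u) (hτ : 0 < τ) (hc : 0 < c)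
    (hbounds : IncrementBounds r L τ c⁻¹ (h, t)) :
    P {ω | X t ω < u ∧ u ≤ X (t + h) ω} ≤ ENNReal.ofReal
      (h * (√L * (√(2 * Real.pi * τ))⁻¹ * Real.exp (-(u ^ 2) * c / 2))) := by
  have ht := left_mem_Icc_of_mem_incrementDomain hz
  have hth := right_mem_Icc_of_mem_incrementDomain hz
  have hpair := hG t ht _ hth
  have := hpair.isProbabilityMeasure
  have hX : ∀ t ∈ Icc a b, MemLp (X t) 2 P := fun t ht ↦ (hG t ht t ht).fst.memLp_two
  have hvar := variance_incrementQuotient hX hcov hz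
  have hres := variance_sub_eq_residualVar hX hcov hz
  have hh : 0 < h := hz.1
  have hslope : cov[X t, incrementQuotient X t h; P] / Var[incrementQuotient X t h; P] + h ≤ 0 := by
    rw [covariance_incrementQuotient hX hcov hz, hvar]
    exact hbounds.slope_le
  have hstep (ω : Ω) : X t ω + h * incrementQuotient X t h ω = X (t + h) ω := by
    rw [incrementQuotient, mul_div_cancel₀ _ hh.ne', add_sub_cancel]
  calc P {ω | X t ω < u ∧ u ≤ X (t + h) ω}
    _ = P {ω | X t ω < u ∧ u ≤ X t ω + h * incrementQuotient X t h ω} := by simp only [hstep]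
    _ ≤ gaussianPDF 0 (residualVar r (h, t)).toNNReal u *
          (ENNReal.ofReal h * ENNReal.ofReal √(incrementVar r (h, t))) := by
        rw [← hres, ← hvar]
        exact measure_upcrossing_le (hasGaussianLaw_prodMk_incrementQuotient hpair) (hmean t ht)
          (integral_incrementQuotient hpair.fst.integrable hpair.snd.integrable (hmean t ht)
            (hmean _ hth)) (hvar ▸ hbounds.incrementVar_pos.ne')
          (hres ▸ hτ.trans_le hbounds.le_residualVar) hh hslope hu
    _ = ENNReal.ofReal (h * (gaussianPDFReal 0 (residualVar r (h, t)).toNNReal u *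
          √(incrementVar r (h, t)))) := by
        rw [gaussianPDF, ← ENNReal.ofReal_mul hh.le,
          ← ENNReal.ofReal_mul (gaussianPDFReal_nonneg _ _ _), mul_left_comm]
    _ ≤ _ :=
        ENNReal.ofReal_le_ofReal (mul_le_mul_of_nonneg_left
          (gaussianPDFReal_residualVar_mul_le hτ hc hbounds u) hh.le)

lemma covDeriv₁₀_eq_zero_of_self_eq_zero (hr : ∀ s t, r s t = ∫ ω, X s ω * X t ω ∂P)
    (ht : MemLp (X t) 2 P) (h0 : r t t = 0) : covDeriv₁₀ r t = 0 := by
  rw [hr, integral_eq_zero_iff_of_nonneg (fun ω ↦ mul_self_nonneg _) (ht.integrable_mul ht)] at h0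
  have hX : X t =ᵐ[P] 0 := h0.mono fun ω hω ↦ mul_self_eq_zero.1 hω
  have hrt : (fun s ↦ r s t) = fun _ ↦ 0 := by
    ext s
    rw [hr]
    exact integral_eq_zero_of_ae (hX.mono fun ω hω ↦ mul_eq_zero_of_right _ hω)
  rw [covDeriv₁₀, hrt, deriv_const]

end GaussianProcess

theorem statement17_general {Ω : Type*} [MeasurableSpace Ω] {P : Measure Ω} {a b : ℝ} (hab : a < b)
    {X : ℝ → Ω → ℝ}
    (hGauss : ∀ s ∈ Icc a b, ∀ t ∈ Icc a b, HasGaussianLaw (fun ω ↦ (X s ω, X t ω)) P)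
    (hmean : ∀ t ∈ Icc a b, P[X t] = 0) {r : ℝ → ℝ → ℝ}
    (hr : ∀ s t, r s t = ∫ ω, X s ω * X t ω ∂P)
    (hrC2 : ContDiffOn ℝ 2 (Function.uncurry r) (Icc a b ×ˢ Icc a b))
    (hvar : ∀ t ∈ Icc a b, r t t ≤ 1) (hr10 : ∀ t ∈ Icc a b, covDeriv₁₀ r t < 0)
    (hr11 : ∀ t ∈ Icc a b, 0 < covDeriv₁₁ r t)
    (hd2 : ∀ t ∈ Icc a b, 0 < covDeriv₁₁ r t - covDeriv₁₀ r t ^ 2 / r t t) :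
    0 < chiTwo r a b ∧ ∃ C > (0 : ℝ), ∀ u : ℝ, 0 ≤ u →
      ∫⁻ ω, ((upcrossingSet (X · ω) a b u).encard : ENNReal) ∂P ≤
        ENNReal.ofReal (C * Real.exp (-(u ^ 2) * (1 + chiTwo r a b) / 2)) := by
  have ha : a ∈ Icc a b := left_mem_Icc.2 hab.le
  have := (hGauss a ha a ha).isProbabilityMeasure
  have hX : ∀ t ∈ Icc a b, MemLp (X t) 2 P := fun t ht ↦ (hGauss t ht t ht).fst.memLp_two
  have hsymm (s t : ℝ) : r s t = r t s := by simp only [hr, mul_comm]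
  have hcov : ∀ s ∈ Icc a b, ∀ t ∈ Icc a b, cov[X s, X t; P] = r s t := fun s hs t ht ↦ by
    rw [covariance_eq_of_integral_eq_zero (hX s hs) (hX t ht) (hmean s hs), hr]
  have hrpos : ∀ t ∈ Icc a b, 0 < r t t := fun t ht ↦
    (hr t t ▸ integral_nonneg fun ω ↦ mul_self_nonneg _ : 0 ≤ r t t).lt_of_ne' fun h0 ↦
      (hr10 t ht).ne (covDeriv₁₀_eq_zero_of_self_eq_zero hr (hX t ht) h0)
  have hχ : 0 < chiTwo r a b :=
    chiTwo_pos hab.le (continuousOn_covDeriv_sq_div hab hsymm hrC2 hr10 hr11) fun t ht ↦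
      div_pos (sq_pos_of_neg (hr10 t ht)) (hr11 t ht)
  obtain ⟨L, hL, τ, hτ, hbounds⟩ := exists_eventually_incrementBounds_chiTwo hab hsymm hrC2 hrpos
    hvar hr10 hr11 hd2 hχ
  refine ⟨hχ, (b - a) * (√L * (√(2 * Real.pi * τ))⁻¹),
    mul_pos (sub_pos.2 hab) (by positivity), fun u hu ↦ ?_⟩
  rw [mul_assoc]
  refine lintegral_encard_upcrossingSet_le hab (fun t ht ↦ (hX t ht).aemeasurable)
    (ae_ne_of_variance_ne_zero (hGauss a ha a ha).fst ?_ u) ?_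
  · rw [← covariance_self (hX a ha).aemeasurable, hcov a ha a ha]
    exact (hrpos a ha).ne'
  · filter_upwards [hbounds] with h hh t hz
    exact measure_upcrossing_increment_le hGauss hmean hcov hz hu hτ (by positivity) (hh t hz)

/-- Let `X` be a centered Gaussian process on `[a,b]` with a.s. `C²`
paths and `C²` covariance `r`, with `r(t,t) ≤ 1`, `r₁₀(t,t) < 0`, `r₁₁(t,t) > 0` and
`r₁₁(t,t) − r₁₀(t,t)²/r(t,t) > 0` on `[a,b]`. With
`χ₂ = min_{t∈[a,b]} r₁₀(t,t)²/r₁₁(t,t) > 0`, there is `C > 0` such that for all `u ≥ 1`,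
`E[N_u⁺([a,b])] ≤ C e^{−u²(1+χ₂)/2}`. -/
theorem statement17
    {Ω : Type*} [MeasurableSpace Ω] (P : Measure Ω) [IsProbabilityMeasure P]
    (a b : ℝ) (hab : a < b)
    (X : ℝ → Ω → ℝ)
    (hjm : Measurable (Function.uncurry X))
    (hGauss : ∀ (n : ℕ) (c : Fin n → ℝ) (t : Fin n → ℝ),
      (∀ i, t i ∈ Set.Icc a b) →
      ∃ v : ℝ≥0, Measure.map (fun ω => ∑ i, c i * X (t i) ω) P = gaussianReal 0 v)
    (hpaths : ∀ᵐ ω ∂P, ContDiffOn ℝ 2 (fun t => X t ω) (Set.Icc a b))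
    (r : ℝ → ℝ → ℝ)
    (hr : ∀ s t, r s t = ∫ ω, X s ω * X t ω ∂P)
    (hrC2 : ContDiffOn ℝ 2 (fun q : ℝ × ℝ => r q.1 q.2) (Set.Icc a b ×ˢ Set.Icc a b))
    (hvar : ∀ t ∈ Set.Icc a b, r t t ≤ 1)
    (hr10 : ∀ t ∈ Set.Icc a b, deriv (fun s => r s t) t < 0)
    (hr11 : ∀ t ∈ Set.Icc a b, 0 < deriv (fun s => deriv (fun t' => r s t') t) t)
    (hd2 : ∀ t ∈ Set.Icc a b,
      0 < deriv (fun s => deriv (fun t' => r s t') t) t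
            - (deriv (fun s => r s t) t) ^ 2 / r t t) :
    0 < sInf ((fun t => (deriv (fun s => r s t) t) ^ 2
        / deriv (fun s => deriv (fun t' => r s t') t) t) '' Set.Icc a b) ∧
    ∃ C > (0:ℝ), ∀ u : ℝ, 1 ≤ u →
      (∫ ω, ((Set.ncard {t ∈ Set.Icc a b |
          X t ω = u ∧ 0 < derivWithin (fun s => X s ω) (Set.Icc a b) t} : ℕ) : ℝ) ∂P)
        ≤ C * Real.exp (-(u ^ 2) *
            (1 + sInf ((fun t => (deriv (fun s => r s t) t) ^ 2
              / deriv (fun s => deriv (fun t' => r s t') t) t) '' Set.Icc a b)) / 2) := by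
  have hX (t : ℝ) : AEMeasurable (X t) P := (hjm.comp measurable_prodMk_left).aemeasurable
  have hpair : ∀ s ∈ Icc a b, ∀ t ∈ Icc a b, ∀ α β : ℝ,
      ∃ v : ℝ≥0, P.map (fun ω ↦ α * X s ω + β * X t ω) = gaussianReal 0 v := fun s hs t ht α β ↦ by
    simpa using hGauss 2 ![α, β] ![s, t] (Fin.forall_fin_two.2 ⟨hs, ht⟩)
  have hmean : ∀ t ∈ Icc a b, P[X t] = 0 := fun t ht ↦ by
    obtain ⟨v, hv⟩ := hpair t ht t ht 1 0
    exact integral_eq_zero_of_map_eq_gaussianReal_zero (hX t) (by simpa using hv)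
  obtain ⟨hχ, C, hC, hle⟩ := statement17_general hab
    (fun s hs t ht ↦ hasGaussianLaw_prodMk_of_forall_map_eq (hX s) (hX t) fun α β ↦
      ⟨0, hpair s hs t ht α β⟩) hmean hr hrC2 hvar hr10 hr11 hd2
  exact ⟨hχ, C, hC, fun u hu ↦
    integral_ncard_le_of_lintegral_encard_le (by positivity) (hle u (zero_le_one.trans hu))⟩
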